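/- arXiv:alg-geom/9603011 — 3 statements merged into one kernel-verified Lean document; each statement's English description precedes it below -/
import Mathlib

section
/- Let b ≥ 1 be an integer and let p, q ∈ S be homogeneous polynomials of degrees b−1 and b respectively, with no common zeros along Y. Then there is a (necessarily unique) S-module homomorphism u from the ideal (x, y²) to S/(x,y) satisfying u(x) = p + (x,y) and u(y²) = q + (x,y), and the kernel of u is exactly the ideal (x², xy, y³, xq − y²p), regarded as an S-submodule of (x, y²). (This kernel is the saturated homogeneous ideal of a multiplicity-three structure W on the line Y.) -/
open MvPolynomial

/-- The pair `(p, q)` has no common zeros along the line `Y = {x = y = 0}`. -/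
def NoCommonZerosAlongY {k : Type*} [Field k] (p q : MvPolynomial (Fin 4) k) : Prop :=
  ∀ c d : k, (c, d) ≠ (0, 0) → eval ![0, 0, c, d] p ≠ 0 ∨ eval ![0, 0, c, d] q ≠ 0

/-- Restriction to the line `Y`. -/
noncomputable def resY (k : Type*) [Field k] :
    MvPolynomial (Fin 4) k →ₐ[k] MvPolynomial (Fin 2) k :=
  aeval ![0, 0, X 0, X 1]

/-- A section of the restriction to `Y`. -/
noncomputable def secY (k : Type*) [Field k] :
    MvPolynomial (Fin 2) k →ₐ[k] MvPolynomial (Fin 4) k :=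
  aeval ![X 2, X 3]

lemma resY_secY {k : Type*} [Field k] (f : MvPolynomial (Fin 2) k) :
    resY k (secY k f) = f := by
  have : (resY k).comp (secY k) = AlgHom.id k _ := by
    apply MvPolynomial.algHom_ext
    intro i
    fin_cases i <;> simp [resY, secY]
  exact DFunLike.congr_fun this f

lemma mk_secY_resY {k : Type*} [Field k] (f : MvPolynomial (Fin 4) k) :
    f - secY k (resY k f) ∈ (Ideal.span {X 0, X 1} : Ideal (MvPolynomial (Fin 4) k)) := by
  rw [← Ideal.Quotient.eq]
  have h : (Ideal.Quotient.mkₐ k (Ideal.span {X 0, X 1} : Ideal (MvPolynomial (Fin 4) k))) =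
      (Ideal.Quotient.mkₐ k (Ideal.span {X 0, X 1} : Ideal (MvPolynomial (Fin 4) k))).comp
        ((secY k).comp (resY k)) := by
    apply MvPolynomial.algHom_ext
    intro i
    fin_cases i
    · simp [resY, secY, Ideal.Quotient.eq_zero_iff_mem]
      exact Ideal.subset_span (by simp)
    · simp [resY, secY, Ideal.Quotient.eq_zero_iff_mem]
      exact Ideal.subset_span (by simp)
    · simp [resY, secY]
    · simp [resY, secY]
  exact DFunLike.congr_fun h f

lemma mem_iff_resY {k : Type*} [Field k] (f : MvPolynomial (Fin 4) k) :
    f ∈ (Ideal.span {X 0, X 1} : Ideal (MvPolynomial (Fin 4) k)) ↔ resY k f = 0 := by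
  constructor
  · intro h
    obtain ⟨a, b, rfl⟩ := Ideal.mem_span_pair.1 h
    simp [resY]
  · intro h
    simpa [h] using mk_secY_resY f

lemma isRelPrime_res {k : Type*} [Field k] [IsAlgClosed k]
    (p q : MvPolynomial (Fin 4) k) (hpq : NoCommonZerosAlongY p q) :
    IsRelPrime (resY k p) (resY k q) := by
  have hev : ∀ (v : Fin 2 → k) (f : MvPolynomial (Fin 4) k),
      aeval v (resY k f) = eval ![0, 0, v 0, v 1] f := by
    intro v f
    have : (aeval v).comp (resY k) = aeval ![0, 0, v 0, v 1] := by
      apply MvPolynomial.algHom_ext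
      intro i
      fin_cases i <;> simp [resY]
    have h2 := DFunLike.congr_fun this f
    simpa [MvPolynomial.aeval_eq_eval] using h2
  have hrad : ∀ i : Fin 2, (X i : MvPolynomial (Fin 2) k) ∈
      (Ideal.span {resY k p, resY k q}).radical := by
    intro i
    rw [← vanishingIdeal_zeroLocus_eq_radical (K := k)]
    intro v hv
    have h1 := hv (resY k p) (Ideal.subset_span (by simp))
    have h2 := hv (resY k q) (Ideal.subset_span (by simp))
    rw [hev] at h1 h2
    have h3 : (v 0, v 1) = ((0, 0) : k × k) := by
      by_contra h
      rcases hpq _ _ h with h | h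
      · exact h h1
      · exact h h2
    rw [Prod.mk.injEq] at h3
    fin_cases i
    · simpa using h3.1
    · simpa using h3.2
  have hd : ∀ d : MvPolynomial (Fin 2) k, d ∣ resY k p → d ∣ resY k q →
      ∀ i : Fin 2, ∃ n : ℕ, d ∣ X i ^ n := by
    intro d h1 h2 i
    obtain ⟨n, hn⟩ := hrad i
    obtain ⟨a, b, hab⟩ := Ideal.mem_span_pair.1 hn
    exact ⟨n, hab ▸ dvd_add (h1.mul_left a) (h2.mul_left b)⟩
  intro d h1 h2
  obtain ⟨n, hn⟩ := hd d h1 h2 0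
  obtain ⟨m, hm⟩ := hd d h1 h2 1
  have hX : IsRelPrime (X 0 : MvPolynomial (Fin 2) k) (X 1) := by
    rw [(X_prime (R := k) (i := (0 : Fin 2))).irreducible.isRelPrime_iff_not_dvd, X_dvd_X]
    simp
  exact (hX.pow_left (m := n)).pow_right (n := m) hn hm

lemma syz_of_isRelPrime {R : Type*} [CommRing R] [IsDomain R] [DecompositionMonoid R]
    {p q a c : R} (h : IsRelPrime p q) (he : a * p + c * q = 0) :
    ∃ t, a = t * q ∧ c = -(t * p) := by
  by_cases hq : q = 0
  · subst hq
    obtain ⟨u, rfl⟩ := isRelPrime_zero_right.1 h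
    refine ⟨-(c * ↑u⁻¹), ?_, by simp⟩
    simpa using he
  · have : q ∣ a * p := ⟨-c, by linear_combination he⟩
    obtain ⟨t, rfl⟩ := h.symm.dvd_of_dvd_mul_right this
    refine ⟨t, mul_comm _ _, ?_⟩
    apply mul_left_cancel₀ hq
    linear_combination he

lemma coeff_mem {k : Type*} [Field k] {a c : MvPolynomial (Fin 4) k}
    (h : a * X 0 + c * X 1 ^ 2 = 0) :
    a ∈ (Ideal.span {X 0, X 1} : Ideal (MvPolynomial (Fin 4) k)) ∧
    c ∈ (Ideal.span {X 0, X 1} : Ideal (MvPolynomial (Fin 4) k)) := by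
  have hX : IsRelPrime (X 0 : MvPolynomial (Fin 4) k) (X 1 ^ 2) := by
    apply IsRelPrime.pow_right
    rw [(X_prime (R := k) (i := (0 : Fin 4))).irreducible.isRelPrime_iff_not_dvd, X_dvd_X]
    simp
  obtain ⟨t, rfl, rfl⟩ := syz_of_isRelPrime hX h
  constructor
  · exact Ideal.mem_span_pair.2 ⟨0, t * X 1, by ring⟩
  · exact Ideal.mem_span_pair.2 ⟨-t, 0, by ring⟩

lemma exists_u {k : Type*} [Field k] (p q : MvPolynomial (Fin 4) k) :
    ∃ u : (Ideal.span {X 0, X 1 ^ 2} : Ideal (MvPolynomial (Fin 4) k)) →ₗ[MvPolynomial (Fin 4) k]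
        (MvPolynomial (Fin 4) k ⧸ (Ideal.span {X 0, X 1} : Ideal (MvPolynomial (Fin 4) k))),
      ∀ (f : (Ideal.span {X 0, X 1 ^ 2} : Ideal (MvPolynomial (Fin 4) k)))
        (a c : MvPolynomial (Fin 4) k), a * X 0 + c * X 1 ^ 2 = (f : MvPolynomial (Fin 4) k) →
        u f = Ideal.Quotient.mk _ (a * p + c * q) := by
  have hex : ∀ f : (Ideal.span {X 0, X 1 ^ 2} : Ideal (MvPolynomial (Fin 4) k)),
      ∃ a c, a * X 0 + c * X 1 ^ 2 = (f : MvPolynomial (Fin 4) k) :=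
    fun f => Ideal.mem_span_pair.1 f.2
  choose A C hAC using hex
  have key : ∀ (f : (Ideal.span {X 0, X 1 ^ 2} : Ideal (MvPolynomial (Fin 4) k)))
        (a c : MvPolynomial (Fin 4) k), a * X 0 + c * X 1 ^ 2 = (f : MvPolynomial (Fin 4) k) →
        Ideal.Quotient.mk (Ideal.span {X 0, X 1} : Ideal (MvPolynomial (Fin 4) k))
          (A f * p + C f * q) = Ideal.Quotient.mk _ (a * p + c * q) := by
    intro f a c h
    have h0 : (A f - a) * X 0 + (C f - c) * X 1 ^ 2 = 0 := by
      linear_combination hAC f - h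
    obtain ⟨h1, h2⟩ := coeff_mem h0
    rw [Ideal.Quotient.eq]
    have := Ideal.add_mem _ (Ideal.mul_mem_left _ p h1) (Ideal.mul_mem_left _ q h2)
    convert this using 1
    ring
  refine ⟨{ toFun := fun f => Ideal.Quotient.mk _ (A f * p + C f * q)
            map_add' := ?_
            map_smul' := ?_ }, key⟩
  · intro f g
    rw [key (f + g) (A f + A g) (C f + C g), ← map_add]
    · congr 1; ring
    · rw [Submodule.coe_add, ← hAC f, ← hAC g]; ring
  · intro r f
    rw [key (r • f) (r * A f) (r * C f)]
    · change _ = Ideal.Quotient.mk _ (r * (A f * p + C f * q))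
      congr 1; ring
    · rw [Submodule.coe_smul, smul_eq_mul, ← hAC f]; ring

/-- for `b ≥ 1` and `p, q` homogeneous of degrees `b−1, b` with no common
zeros along `Y`, there is a unique `S`-module homomorphism `u : (x, y²) → S/(x,y)` with
`u(x) = p̄`, `u(y²) = q̄`, and its kernel is the ideal `(x², xy, y³, xq − y²p)`. -/
theorem stmt_3 {k : Type*} [Field k] [IsAlgClosed k] (b : ℕ) (hb : 1 ≤ b)
    (p q : MvPolynomial (Fin 4) k)
    (hp : p.IsHomogeneous (b - 1)) (hq : q.IsHomogeneous b)
    (hpq : NoCommonZerosAlongY p q) :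
    ∃ u : (Ideal.span {X 0, X 1 ^ 2} : Ideal (MvPolynomial (Fin 4) k)) →ₗ[MvPolynomial (Fin 4) k]
        (MvPolynomial (Fin 4) k ⧸ (Ideal.span {X 0, X 1} : Ideal (MvPolynomial (Fin 4) k))),
      (u ⟨X 0, Ideal.subset_span (by simp)⟩ = Ideal.Quotient.mk _ p ∧
        u ⟨X 1 ^ 2, Ideal.subset_span (by simp)⟩ = Ideal.Quotient.mk _ q) ∧
      (∀ u' : (Ideal.span {X 0, X 1 ^ 2} : Ideal (MvPolynomial (Fin 4) k)) →ₗ[MvPolynomial (Fin 4) k]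
          (MvPolynomial (Fin 4) k ⧸ (Ideal.span {X 0, X 1} : Ideal (MvPolynomial (Fin 4) k))),
        (u' ⟨X 0, Ideal.subset_span (by simp)⟩ = Ideal.Quotient.mk _ p ∧
          u' ⟨X 1 ^ 2, Ideal.subset_span (by simp)⟩ = Ideal.Quotient.mk _ q) → u' = u) ∧
      LinearMap.ker u = Submodule.comap
        (Submodule.subtype (Ideal.span {X 0, X 1 ^ 2} : Ideal (MvPolynomial (Fin 4) k)))
        (Ideal.span {X 0 ^ 2, X 0 * X 1, X 1 ^ 3, X 0 * q - X 1 ^ 2 * p}) := by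
  obtain ⟨u, hu⟩ := exists_u p q
  refine ⟨u, ⟨?_, ?_⟩, ?_, ?_⟩
  · rw [hu _ 1 0 (by simp)]; simp
  · rw [hu _ 0 1 (by simp)]; simp
  · rintro u' ⟨h1, h2⟩
    ext f
    obtain ⟨a, c, hac⟩ := Ideal.mem_span_pair.1 f.2
    have hf : f = a • ⟨X 0, Ideal.subset_span (by simp)⟩ +
        c • ⟨X 1 ^ 2, Ideal.subset_span (by simp)⟩ := by
      apply Subtype.ext
      simpa using hac.symm
    rw [hu f a c hac, hf, map_add, map_smul, map_smul, h1, h2]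
    rfl
  · ext f
    rw [LinearMap.mem_ker, Submodule.mem_comap, Submodule.subtype_apply]
    obtain ⟨a, c, hac⟩ := Ideal.mem_span_pair.1 f.2
    constructor
    · intro h
      rw [hu f a c hac, Ideal.Quotient.eq_zero_iff_mem, mem_iff_resY, map_add, map_mul,
        map_mul] at h
      obtain ⟨t, h1, h2⟩ := syz_of_isRelPrime (isRelPrime_res p q hpq) h
      have ha : a - secY k t * q ∈ (Ideal.span {X 0, X 1} : Ideal (MvPolynomial (Fin 4) k)) := by
        rw [mem_iff_resY, map_sub, map_mul, resY_secY, h1, sub_self]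
      have hc : c + secY k t * p ∈ (Ideal.span {X 0, X 1} : Ideal (MvPolynomial (Fin 4) k)) := by
        rw [mem_iff_resY, map_add, map_mul, resY_secY, h2, neg_add_cancel]
      obtain ⟨a1, a2, ha⟩ := Ideal.mem_span_pair.1 ha
      obtain ⟨c1, c2, hc⟩ := Ideal.mem_span_pair.1 hc
      have hf : (f : MvPolynomial (Fin 4) k) = a1 * X 0 ^ 2 + ((a2 + c1 * X 1) * (X 0 * X 1) +
          (c2 * X 1 ^ 3 + secY k t * (X 0 * q - X 1 ^ 2 * p))) := by
        linear_combination -hac - X 0 * ha - X 1 ^ 2 * hc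
      rw [hf]
      refine Ideal.add_mem _ (Ideal.mul_mem_left _ _ (Ideal.subset_span (by simp)))
        (Ideal.add_mem _ (Ideal.mul_mem_left _ _ (Ideal.subset_span (by simp)))
        (Ideal.add_mem _ (Ideal.mul_mem_left _ _ (Ideal.subset_span (by simp)))
        (Ideal.mul_mem_left _ _ (Ideal.subset_span (by simp)))))
    · intro h
      simp only [Ideal.mem_span_insert, Ideal.mem_span_singleton'] at h
      obtain ⟨r1, _, ⟨r2, _, ⟨r3, _, ⟨r4, rfl⟩, rfl⟩, rfl⟩, h⟩ := h
      rw [hu f (r1 * X 0 + r2 * X 1 + r4 * q) (r3 * X 1 - r4 * p) (by rw [h]; ring),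
        Ideal.Quotient.eq_zero_iff_mem]
      exact Ideal.mem_span_pair.2 ⟨r1 * p, r2 * p + r3 * q, by ring⟩
end

section
/- Let b ≥ 1 be an integer and let p, q ∈ S be homogeneous polynomials of degrees b−1 and b respectively, with no common zeros along Y. Then for all sufficiently large n, the k-dimension of the degree-n graded component of S/(x², xy, y³, xq − y²p) equals 3n + b. (Equivalently, the triple line W with saturated ideal I_W = (x², xy, y³, xq − y²p) is a curve of degree 3 and arithmetic genus 1−b.) -/
open MvPolynomial

/-- The `k`-dimension of the degree-`n` graded piece of `S ⧸ I`, realized as the image of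
the space of degree-`n` homogeneous polynomials in the quotient. -/
noncomputable def gradedPieceDim (k : Type*) [Field k] (I : Ideal (MvPolynomial (Fin 4) k))
    (n : ℕ) : ℕ :=
  Module.finrank k
    ((homogeneousSubmodule (Fin 4) k n).map (Ideal.Quotient.mkₐ k I).toLinearMap)

namespace TripleLine

open Polynomial in
/-- restriction to `Y`, dehomogenized -/
noncomputable def dl (k : Type*) [Field k] : MvPolynomial (Fin 4) k →ₐ[k] Polynomial k :=
  aeval ![0, 0, Polynomial.X, 1]

noncomputable def ps1 (k : Type*) [Field k] :
    MvPolynomial (Fin 4) k →ₐ[k] Polynomial (Polynomial k) :=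
  aeval ![Polynomial.X, 0, Polynomial.C Polynomial.X, 1]

noncomputable def ps2 (k : Type*) [Field k] :
    MvPolynomial (Fin 4) k →ₐ[k] Polynomial (Polynomial k) :=
  aeval ![0, Polynomial.X, Polynomial.C Polynomial.X, 1]

section
variable {k : Type*} [Field k]

lemma ps1_zero (f : MvPolynomial (Fin 4) k) : (ps1 k f).coeff 0 = dl k f := by
  have h : (Polynomial.constantCoeff.comp (ps1 k).toRingHom) = (dl k).toRingHom := by
    apply MvPolynomial.ringHom_ext
    · intro r
      simp [ps1, dl, Polynomial.algebraMap_apply]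
    · intro i
      fin_cases i <;> simp [ps1, dl]
  exact congrArg (fun g => g f) h

lemma ps2_zero (f : MvPolynomial (Fin 4) k) : (ps2 k f).coeff 0 = dl k f := by
  have h : (Polynomial.constantCoeff.comp (ps2 k).toRingHom) = (dl k).toRingHom := by
    apply MvPolynomial.ringHom_ext
    · intro r
      simp [ps2, dl, Polynomial.algebraMap_apply]
    · intro i
      fin_cases i <;> simp [ps2, dl]
  exact congrArg (fun g => g f) h

lemma hom_mem (n : ℕ) (K : Submodule k (MvPolynomial (Fin 4) k))
    (hK : ∀ a c i j : ℕ, a + c + i + j = n → (X 0 ^ a * X 1 ^ c * X 2 ^ i * X 3 ^ j) ∈ K)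
    (f : MvPolynomial (Fin 4) k) (hf : f.IsHomogeneous n) : f ∈ K := by
  rw [f.as_sum]
  apply Submodule.sum_mem
  intro s hs
  have h1 : s.degree = n := by
    have := hf (mem_support_iff.mp hs)
    rw [Finsupp.degree_eq_weight_one]; exact this
  have h2 : monomial s (coeff s f) = (coeff s f) •
      (X 0 ^ (s 0) * X 1 ^ (s 1) * X 2 ^ (s 2) * X 3 ^ (s 3) : MvPolynomial (Fin 4) k) := by
    rw [monomial_eq, smul_eq_C_mul, Finsupp.prod_fintype _ _ (by simp), Fin.prod_univ_four]
  rw [h2]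
  apply K.smul_mem
  apply hK
  rw [← h1, Finsupp.degree_eq_sum, Fin.sum_univ_four]

/-- coefficients map -/
noncomputable def cf (k : Type*) [Field k] (n : ℕ) : Polynomial (Polynomial k) →ₗ[k] Polynomial k :=
  (Polynomial.lcoeff (Polynomial k) n).restrictScalars k

noncomputable def Ph (k : Type*) [Field k] : MvPolynomial (Fin 4) k →ₗ[k]
    Polynomial k × Polynomial k × Polynomial k × Polynomial k :=
  ((cf k 0) ∘ₗ (ps2 k).toLinearMap).prod <| ((cf k 1) ∘ₗ (ps2 k).toLinearMap).prod <|
    ((cf k 1) ∘ₗ (ps1 k).toLinearMap).prod ((cf k 2) ∘ₗ (ps2 k).toLinearMap)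

lemma Ph_apply (f : MvPolynomial (Fin 4) k) : Ph k f =
    ((ps2 k f).coeff 0, (ps2 k f).coeff 1, (ps1 k f).coeff 1, (ps2 k f).coeff 2) := rfl

lemma ps1_mon (a c i j : ℕ) :
    ps1 k (X 0 ^ a * X 1 ^ c * X 2 ^ i * X 3 ^ j) =
      if c = 0 then Polynomial.C (Polynomial.X ^ i) * Polynomial.X ^ a else 0 := by
  split_ifs with h
  · simp [ps1, h]; ring
  · simp [ps1, h]

lemma ps2_mon (a c i j : ℕ) :
    ps2 k (X 0 ^ a * X 1 ^ c * X 2 ^ i * X 3 ^ j) =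
      if a = 0 then Polynomial.C (Polynomial.X ^ i) * Polynomial.X ^ c else 0 := by
  split_ifs with h
  · simp [ps2, h]; ring
  · simp [ps2, h]

noncomputable def hm (k : Type*) [Field k] (m : ℕ) : Polynomial k →ₗ[k] MvPolynomial (Fin 4) k :=
  ∑ i ∈ Finset.range (m + 1),
    (Polynomial.lcoeff k i).smulRight (X 2 ^ i * X 3 ^ (m - i) : MvPolynomial (Fin 4) k)

lemma hm_apply (m : ℕ) (g : Polynomial k) : hm k m g =
    ∑ i ∈ Finset.range (m + 1), g.coeff i • (X 2 ^ i * X 3 ^ (m - i)) := by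
  simp [hm]

lemma hm_X_pow (m i : ℕ) (h : i ≤ m) :
    hm k m (Polynomial.X ^ i) = X 2 ^ i * X 3 ^ (m - i) := by
  rw [hm_apply, Finset.sum_eq_single i]
  · simp
  · intro j _ hj
    simp [Polynomial.coeff_X_pow, hj]
  · intro h'
    simp at h'; omega

lemma hm_hom (m : ℕ) (g : Polynomial k) : (hm k m g).IsHomogeneous m := by
  rw [hm_apply]
  apply IsHomogeneous.sum
  intro i hi
  rw [smul_eq_C_mul]
  have hi' : i ≤ m := by simp at hi; omega
  have := (isHomogeneous_C (Fin 4) (g.coeff i)).mul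
    (((isHomogeneous_X k (2 : Fin 4)).pow i).mul ((isHomogeneous_X k (3 : Fin 4)).pow (m - i)))
  convert this using 1
  omega

lemma sum_coeff (m : ℕ) (g : Polynomial k) (hg : g ∈ Polynomial.degreeLT k (m + 1)) :
    ∑ i ∈ Finset.range (m + 1), g.coeff i • (Polynomial.X ^ i : Polynomial k) = g := by
  rw [Polynomial.mem_degreeLT] at hg
  conv_rhs => rw [Polynomial.as_sum_range' g (m + 1)
    (by by_cases h : g = 0
        · simp [h]
        · exact (Polynomial.natDegree_lt_iff_degree_lt h).2 hg)]
  apply Finset.sum_congr rfl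
  intro i _
  rw [Polynomial.smul_X_eq_monomial]

lemma dl_hm (m : ℕ) (g : Polynomial k) (hg : g ∈ Polynomial.degreeLT k (m + 1)) :
    dl k (hm k m g) = g := by
  rw [hm_apply, map_sum]
  conv_rhs => rw [← sum_coeff m g hg]
  apply Finset.sum_congr rfl
  intro i _
  rw [map_smul]
  simp [dl]

lemma ps1_hm (m : ℕ) (g : Polynomial k) (hg : g ∈ Polynomial.degreeLT k (m + 1)) :
    ps1 k (hm k m g) = Polynomial.C g := by
  rw [hm_apply, map_sum]
  conv_rhs => rw [← sum_coeff m g hg, map_sum]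
  apply Finset.sum_congr rfl
  intro i _
  rw [map_smul, ← Polynomial.smul_C]
  simp [ps1]

lemma ps2_hm (m : ℕ) (g : Polynomial k) (hg : g ∈ Polynomial.degreeLT k (m + 1)) :
    ps2 k (hm k m g) = Polynomial.C g := by
  rw [hm_apply, map_sum]
  conv_rhs => rw [← sum_coeff m g hg, map_sum]
  apply Finset.sum_congr rfl
  intro i _
  rw [map_smul, ← Polynomial.smul_C]
  simp [ps2]

noncomputable abbrev EE (k : Type*) [Field k] (n : ℕ) :
    Submodule k (Polynomial k × Polynomial k × Polynomial k × Polynomial k) :=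
  (Polynomial.degreeLT k (n + 3)).prod <| (Polynomial.degreeLT k (n + 2)).prod <|
    (Polynomial.degreeLT k (n + 2)).prod (Polynomial.degreeLT k (n + 1))

noncomputable def LL (k : Type*) [Field k] (n : ℕ) :
    Polynomial k × Polynomial k × Polynomial k × Polynomial k →ₗ[k] MvPolynomial (Fin 4) k :=
  (hm k (n + 2)).coprod <| (LinearMap.mulLeft k (X 1) ∘ₗ hm k (n + 1)).coprod <|
    (LinearMap.mulLeft k (X 0) ∘ₗ hm k (n + 1)).coprod (LinearMap.mulLeft k (X 1 ^ 2) ∘ₗ hm k n)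

lemma LL_apply (n : ℕ) (a c d e : Polynomial k) : LL k n (a, c, d, e) =
    hm k (n + 2) a + (X 1 * hm k (n + 1) c + (X 0 * hm k (n + 1) d + X 1 ^ 2 * hm k n e)) := rfl

lemma LL_hom (n : ℕ) (v) : (LL k n v).IsHomogeneous (n + 2) := by
  obtain ⟨a, c, d, e⟩ := v
  rw [LL_apply]
  refine (hm_hom _ _).add (.add ?_ (.add ?_ ?_))
  · have := (isHomogeneous_X k (1 : Fin 4)).mul (hm_hom (n + 1) c)
    convert this using 1; omega
  · have := (isHomogeneous_X k (0 : Fin 4)).mul (hm_hom (n + 1) d)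
    convert this using 1; omega
  · have := ((isHomogeneous_X k (1 : Fin 4)).pow 2).mul (hm_hom n e)
    convert this using 1; omega

lemma Ph_LL (n : ℕ) (v) (hv : v ∈ EE k n) : Ph k (LL k n v) = v := by
  obtain ⟨a, c, d, e⟩ := v
  obtain ⟨ha, hc, hd, he⟩ := hv
  have h1 : ps1 k (LL k n (a, c, d, e)) = Polynomial.C a + Polynomial.X * Polynomial.C d := by
    rw [LL_apply]
    simp only [map_add, map_mul, ps1_hm _ _ ha, ps1_hm _ _ hc, ps1_hm _ _ hd, map_pow]
    simp [ps1]
  have h2 : ps2 k (LL k n (a, c, d, e)) = Polynomial.C a + Polynomial.X * Polynomial.C c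
      + Polynomial.X ^ 2 * Polynomial.C e := by
    rw [LL_apply]
    simp only [map_add, map_mul, ps2_hm _ _ ha, ps2_hm _ _ hc, ps2_hm _ _ he, map_pow]
    simp [ps2, add_assoc]
  rw [Ph_apply, h1, h2]
  simp [Polynomial.coeff_X, Polynomial.coeff_C, Polynomial.coeff_X_pow]

lemma Ph_mon (a c i j : ℕ) :
    Ph k (X 0 ^ a * X 1 ^ c * X 2 ^ i * X 3 ^ j) =
      (if a = 0 ∧ c = 0 then Polynomial.X ^ i else 0,
       if a = 0 ∧ c = 1 then Polynomial.X ^ i else 0,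
       if a = 1 ∧ c = 0 then Polynomial.X ^ i else 0,
       if a = 0 ∧ c = 2 then Polynomial.X ^ i else 0) := by
  rw [Ph_apply, ps1_mon, ps2_mon]
  refine Prod.ext ?_ (Prod.ext ?_ (Prod.ext ?_ ?_))
  all_goals
    by_cases ha : a = 0 <;> by_cases hc : c = 0 <;>
      simp [ha, hc, Polynomial.coeff_X_pow, Polynomial.coeff_C_mul, -map_pow,
        eq_comm]

lemma Ph_mem (n : ℕ) (f : MvPolynomial (Fin 4) k) (hf : f.IsHomogeneous (n + 2)) :
    Ph k f ∈ EE k n := by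
  change f ∈ (EE k n).comap (Ph k)
  refine hom_mem _ _ ?_ f hf
  intro a c i j h
  rw [Submodule.mem_comap, Ph_mon]
  have key : ∀ (P : Prop) [Decidable P] (m : ℕ), (P → i < m) →
      (if P then Polynomial.X ^ i else 0 : Polynomial k) ∈ Polynomial.degreeLT k m := by
    intro P _ m hP
    split_ifs with h
    · rw [Polynomial.mem_degreeLT, Polynomial.degree_X_pow]
      exact_mod_cast hP h
    · exact zero_mem _
  refine ⟨key _ _ ?_, key _ _ ?_, key _ _ ?_, key _ _ ?_⟩ <;> rintro ⟨h1, h2⟩ <;> omega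

lemma map_Ph (n : ℕ) : (homogeneousSubmodule (Fin 4) k (n + 2)).map (Ph k) = EE k n := by
  apply le_antisymm
  · rintro _ ⟨f, hf, rfl⟩
    exact Ph_mem n f hf
  · intro v hv
    exact ⟨LL k n v, LL_hom n v, Ph_LL n v hv⟩

lemma sub_LL (I : Ideal (MvPolynomial (Fin 4) k)) (h1 : X 0 ^ 2 ∈ I) (h2 : X 0 * X 1 ∈ I)
    (h3 : X 1 ^ 3 ∈ I) (n : ℕ) (f : MvPolynomial (Fin 4) k) (hf : f.IsHomogeneous (n + 2)) :
    f - LL k n (Ph k f) ∈ I := by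
  change f ∈ (I.restrictScalars k).comap (LinearMap.id - LL k n ∘ₗ Ph k)
  refine hom_mem _ _ ?_ f hf
  intro a c i j h
  change X 0 ^ a * X 1 ^ c * X 2 ^ i * X 3 ^ j
    - LL k n (Ph k (X 0 ^ a * X 1 ^ c * X 2 ^ i * X 3 ^ j)) ∈ I
  rw [Ph_mon, LL_apply]
  match a, c with
  | 0, 0 =>
    have : n + 2 - i = j := by omega
    simp [hm_X_pow (k := k) (n + 2) i (by omega), this]
  | 0, 1 =>
    have : n + 1 - i = j := by omega
    simp [hm_X_pow (k := k) (n + 1) i (by omega), this, mul_assoc]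
  | 0, 2 =>
    have : n - i = j := by omega
    simp [hm_X_pow (k := k) n i (by omega), this, mul_assoc]
  | 1, 0 =>
    have : n + 1 - i = j := by omega
    simp [hm_X_pow (k := k) (n + 1) i (by omega), this, mul_assoc]
  | 0, c + 3 =>
    simp
    have := I.mul_mem_left (X 1 ^ c * X 2 ^ i * X 3 ^ j) h3
    convert this using 1; ring
  | 1, c + 1 =>
    simp
    have := I.mul_mem_left (X 1 ^ c * X 2 ^ i * X 3 ^ j) h2
    convert this using 1; ring
  | a + 2, c =>
    simp
    have := I.mul_mem_left (X 0 ^ a * X 1 ^ c * X 2 ^ i * X 3 ^ j) h1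
    convert this using 1; ring

lemma dl_coeff (m : ℕ) (f : MvPolynomial (Fin 4) k) (hf : f.IsHomogeneous m) :
    (dl k f).coeff m = eval ![0, 0, 1, 0] f := by
  change f ∈ LinearMap.eqLocus (Polynomial.lcoeff k m ∘ₗ (dl k).toLinearMap)
    (aeval ![0, 0, 1, 0] : MvPolynomial (Fin 4) k →ₐ[k] k).toLinearMap
  refine hom_mem _ _ ?_ f hf
  intro a c i j h
  by_cases ha : a = 0
  · by_cases hc : c = 0
    · have : m = i ↔ j = 0 := by omega
      simp [dl, ha, hc, Polynomial.coeff_X_pow, this, zero_pow_eq]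
    · simp [dl, hc]
  · simp [dl, ha]

lemma dl_deg (m : ℕ) (f : MvPolynomial (Fin 4) k) (hf : f.IsHomogeneous m) :
    (dl k f).natDegree ≤ m := by
  have : dl k f ∈ Polynomial.degreeLE k m := by
    change f ∈ (Polynomial.degreeLE k m).comap (dl k).toLinearMap
    refine hom_mem _ _ ?_ f hf
    intro a c i j h
    rw [Submodule.mem_comap, Polynomial.mem_degreeLE]
    by_cases ha : a = 0
    · by_cases hc : c = 0
      · simp [dl, ha, hc]; omega
      · simp [dl, hc]
    · simp [dl, ha]
  exact Polynomial.natDegree_le_of_degree_le (Polynomial.mem_degreeLE.1 this)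

lemma finrank_aux {M M1 M2 : Type*} [AddCommGroup M] [AddCommGroup M1] [AddCommGroup M2]
    [Module k M] [Module k M1] [Module k M2] (A : M →ₗ[k] M1) (B : M →ₗ[k] M2)
    (H : Submodule k M) (U : Submodule k M2) (hU : U ≤ H.map B)
    [FiniteDimensional k (H.map B)]
    (h : ∀ f ∈ H, A f = 0 ↔ B f ∈ U) :
    Module.finrank k (H.map A) + Module.finrank k U = Module.finrank k (H.map B) := by
  have e1 : (H ⧸ LinearMap.ker (A.submoduleMap H)) ≃ₗ[k] H.map A :=
    LinearMap.quotKerEquivOfSurjective _ (LinearMap.submoduleMap_surjective A H)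
  let U' := U.comap (H.map B).subtype
  let B' := U'.mkQ ∘ₗ B.submoduleMap H
  have e2 : (H ⧸ LinearMap.ker B') ≃ₗ[k] (H.map B ⧸ U') :=
    LinearMap.quotKerEquivOfSurjective _
      ((Submodule.mkQ_surjective _).comp (LinearMap.submoduleMap_surjective B H))
  have hk : LinearMap.ker (A.submoduleMap H) = LinearMap.ker B' := by
    ext ⟨f, hf⟩
    have := h f hf
    simp only [LinearMap.mem_ker, B', LinearMap.comp_apply, Submodule.mkQ_apply,
      Submodule.Quotient.mk_eq_zero, U', Submodule.mem_comap]
    rw [← Subtype.coe_inj]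
    exact this
  have e3 : U' ≃ₗ[k] U := Submodule.comapSubtypeEquivOfLe hU
  rw [← e1.finrank_eq, ← e3.finrank_eq, hk, e2.finrank_eq]
  exact Submodule.finrank_quotient_add_finrank U'

lemma finrank_degreeLT (m : ℕ) : Module.finrank k (Polynomial.degreeLT k m) = m := by
  rw [(Polynomial.degreeLTEquiv k m).finrank_eq]; simp

instance (m : ℕ) : FiniteDimensional k (Polynomial.degreeLT k m) :=
  Module.Finite.equiv (Polynomial.degreeLTEquiv k m).symm

def prodEq {M M' : Type*} [AddCommGroup M] [AddCommGroup M'] [Module k M] [Module k M']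
    (p : Submodule k M) (q : Submodule k M') : p.prod q ≃ₗ[k] p × q where
  toFun v := (⟨v.1.1, v.2.1⟩, ⟨v.1.2, v.2.2⟩)
  invFun v := ⟨(v.1.1, v.2.1), v.1.2, v.2.2⟩
  map_add' _ _ := rfl
  map_smul' _ _ := rfl
  left_inv _ := rfl
  right_inv _ := rfl

noncomputable def eqE (k : Type*) [Field k] (n : ℕ) : EE k n ≃ₗ[k] Polynomial.degreeLT k (n + 3) ×
    Polynomial.degreeLT k (n + 2) × Polynomial.degreeLT k (n + 2) × Polynomial.degreeLT k (n + 1) :=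
  (prodEq _ _).trans ((LinearEquiv.refl _ _).prodCongr
    ((prodEq _ _).trans ((LinearEquiv.refl _ _).prodCongr (prodEq _ _))))

instance (n : ℕ) : FiniteDimensional k (EE k n) := Module.Finite.equiv (eqE k n).symm

lemma finrank_EE (n : ℕ) : Module.finrank k (EE k n) = 4 * n + 8 := by
  rw [(eqE k n).finrank_eq]
  simp only [Module.finrank_prod, finrank_degreeLT]
  ring

noncomputable def mu (P Q : Polynomial k) : Polynomial k →ₗ[k]
    Polynomial k × Polynomial k × Polynomial k × Polynomial k :=
  (0 : Polynomial k →ₗ[k] Polynomial k).prod <| (0 : Polynomial k →ₗ[k] Polynomial k).prod <|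
    (LinearMap.mulLeft k Q).prod (-LinearMap.mulLeft k P)

lemma mu_apply (P Q g : Polynomial k) : mu P Q g = (0, 0, Q * g, -(P * g)) := rfl

lemma mu_inj (P Q : Polynomial k) (h : P ≠ 0 ∨ Q ≠ 0) : Function.Injective (mu P Q) := by
  rw [← LinearMap.ker_eq_bot, LinearMap.ker_eq_bot']
  intro g hg
  rw [mu_apply] at hg
  simp only [Prod.mk_eq_zero, neg_eq_zero, mul_eq_zero] at hg
  tauto

lemma mem_LT {m : ℕ} {g : Polynomial k} (h : g = 0 ∨ g.natDegree < m) :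
    g ∈ Polynomial.degreeLT k m := by
  rcases h with rfl | h
  · exact zero_mem _
  · rw [Polynomial.mem_degreeLT]
    exact lt_of_le_of_lt Polynomial.degree_le_natDegree (by exact_mod_cast h)

lemma LT_mem {m : ℕ} {g : Polynomial k} (h : g ∈ Polynomial.degreeLT k m) :
    g = 0 ∨ g.natDegree < m := by
  by_cases h0 : g = 0
  · exact Or.inl h0
  · exact Or.inr ((Polynomial.natDegree_lt_iff_degree_lt h0).2 (Polynomial.mem_degreeLT.1 h))

lemma mul_mem_LT {m d e : ℕ} {g Q : Polynomial k} (h : g ∈ Polynomial.degreeLT k m)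
    (hQ : Q.natDegree ≤ d) (he : m + d ≤ e) : Q * g ∈ Polynomial.degreeLT k e := by
  rcases LT_mem h with rfl | h
  · simp
  · apply mem_LT
    right
    have := Polynomial.natDegree_mul_le (p := Q) (q := g)
    omega

lemma of_mul_mem_LT {m d e : ℕ} {g Q : Polynomial k} (h : Q * g ∈ Polynomial.degreeLT k e)
    (hQ : Q.natDegree ≤ d) (hc : Q.coeff d ≠ 0) (he : e ≤ m + d) :
    g ∈ Polynomial.degreeLT k m := by
  have hQ0 : Q ≠ 0 := by rintro rfl; simp at hc
  have hd := Polynomial.le_natDegree_of_ne_zero hc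
  apply mem_LT
  by_cases hg : g = 0
  · exact Or.inl hg
  right
  rcases LT_mem h with h | h
  · simp_all
  · rw [Polynomial.natDegree_mul hQ0 hg] at h
    omega

lemma Ph_f (p q D : MvPolynomial (Fin 4) k) :
    Ph k (D * (X 0 * q - X 1 ^ 2 * p)) = mu (dl k p) (dl k q) (dl k D) := by
  have h1 : ps1 k (D * (X 0 * q - X 1 ^ 2 * p)) = ps1 k q * ps1 k D * Polynomial.X := by
    simp only [map_mul, map_sub, map_pow]
    have h0 : ps1 k (X 0) = Polynomial.X := by simp [ps1]
    have h0' : ps1 k (X 1) = 0 := by simp [ps1]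
    rw [h0, h0']; ring
  have h2 : ps2 k (D * (X 0 * q - X 1 ^ 2 * p)) = -(ps2 k p * ps2 k D) * Polynomial.X ^ 2 := by
    simp only [map_mul, map_sub, map_pow]
    have h0 : ps2 k (X 0) = 0 := by simp [ps2]
    have h0' : ps2 k (X 1) = Polynomial.X := by simp [ps2]
    rw [h0, h0']; ring
  rw [Ph_apply, mu_apply, h1, h2]
  simp only [Polynomial.coeff_mul_X_pow', Polynomial.coeff_mul_X, Polynomial.mul_coeff_zero,
    ps1_zero, ps2_zero, Polynomial.coeff_neg]
  simp [Polynomial.mul_coeff_zero, ps2_zero]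

lemma Ph_J1 (D : MvPolynomial (Fin 4) k) : Ph k (D * X 0 ^ 2) = 0 := by
  have h0 : ps2 k (X 0) = 0 := by simp [ps2]
  have h1 : ps1 k (X 0) = Polynomial.X := by simp [ps1]
  rw [Ph_apply, map_mul, map_mul, map_pow, map_pow, h0, h1]
  simp [Polynomial.coeff_mul_X_pow']

lemma Ph_J2 (D : MvPolynomial (Fin 4) k) : Ph k (D * (X 0 * X 1)) = 0 := by
  have h0 : ps2 k (X 0) = 0 := by simp [ps2]
  have h1 : ps1 k (X 1) = 0 := by simp [ps1]
  rw [Ph_apply, map_mul, map_mul, map_mul, map_mul, h0, h1]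
  simp

lemma Ph_J3 (D : MvPolynomial (Fin 4) k) : Ph k (D * X 1 ^ 3) = 0 := by
  have h0 : ps2 k (X 1) = Polynomial.X := by simp [ps2]
  have h1 : ps1 k (X 1) = 0 := by simp [ps1]
  rw [Ph_apply, map_mul, map_mul, map_pow, map_pow, h0, h1]
  simp [Polynomial.coeff_mul_X_pow']

end

end TripleLine

open TripleLine in
/-- the triple line `W` with ideal `(x², xy, y³, xq − y²p)` has Hilbert
polynomial `3n + b`, i.e. it is a curve of degree `3` and arithmetic genus `1−b`. -/
theorem stmt_4 {k : Type*} [Field k] [IsAlgClosed k] (b : ℕ) (hb : 1 ≤ b)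
    (p q : MvPolynomial (Fin 4) k)
    (hp : p.IsHomogeneous (b - 1)) (hq : q.IsHomogeneous b)
    (hpq : NoCommonZerosAlongY p q) :
    ∃ N : ℕ, ∀ n : ℕ, N ≤ n →
      (gradedPieceDim k (Ideal.span {X 0 ^ 2, X 0 * X 1, X 1 ^ 3, X 0 * q - X 1 ^ 2 * p}) n : ℤ)
        = 3 * n + b := by
  refine ⟨b + 2, fun n hn => ?_⟩
  obtain ⟨m, rfl⟩ : ∃ m, n = m + 2 := ⟨n - 2, by omega⟩
  obtain ⟨r, hr⟩ : ∃ r, m + 2 = r + 1 + b := ⟨m + 1 - b, by omega⟩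
  set I : Ideal (MvPolynomial (Fin 4) k) :=
    Ideal.span {X 0 ^ 2, X 0 * X 1, X 1 ^ 3, X 0 * q - X 1 ^ 2 * p} with hI
  have i1 : X 0 ^ 2 ∈ I := Ideal.subset_span (by simp)
  have i2 : X 0 * X 1 ∈ I := Ideal.subset_span (by simp)
  have i3 : X 1 ^ 3 ∈ I := Ideal.subset_span (by simp)
  have i4 : X 0 * q - X 1 ^ 2 * p ∈ I := Ideal.subset_span (by simp)
  have dp := dl_deg _ p hp
  have dq := dl_deg _ q hq
  have hc : (dl k p).coeff (b - 1) ≠ 0 ∨ (dl k q).coeff b ≠ 0 := by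
    rw [dl_coeff _ p hp, dl_coeff _ q hq]
    exact hpq 1 0 (by simp)
  have hinj : Function.Injective (mu (dl k p) (dl k q)) := by
    apply mu_inj
    rcases hc with h | h
    · left; intro h0; simp [h0] at h
    · right; intro h0; simp [h0] at h
  let U := (Polynomial.degreeLT k (r + 1)).map (mu (dl k p) (dl k q))
  have hU : U ≤ (homogeneousSubmodule (Fin 4) k (m + 2)).map (Ph k) := by
    rw [map_Ph]
    rintro _ ⟨g, hg, rfl⟩
    rw [mu_apply]
    exact ⟨zero_mem _, zero_mem _, mul_mem_LT hg dq (by omega),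
      neg_mem (mul_mem_LT hg dp (by omega))⟩
  have key : ∀ f ∈ homogeneousSubmodule (Fin 4) k (m + 2),
      (Ideal.Quotient.mkₐ k I).toLinearMap f = 0 ↔ Ph k f ∈ U := by
    intro f hf
    have hf' : f.IsHomogeneous (m + 2) := hf
    have : (Ideal.Quotient.mkₐ k I).toLinearMap f = 0 ↔ f ∈ I := Ideal.Quotient.eq_zero_iff_mem
    rw [this]
    constructor
    · intro hfI
      have hE := Ph_mem m f hf'
      rw [hI, Ideal.mem_span_insert] at hfI
      obtain ⟨A, z, hz, rfl⟩ := hfI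
      rw [Ideal.mem_span_insert] at hz
      obtain ⟨B, z, hz, rfl⟩ := hz
      rw [Ideal.mem_span_insert] at hz
      obtain ⟨C, z, hz, rfl⟩ := hz
      rw [Ideal.mem_span_singleton'] at hz
      obtain ⟨D, rfl⟩ := hz
      simp only [map_add, Ph_J1, Ph_J2, Ph_J3, Ph_f, zero_add] at hE ⊢
      refine ⟨dl k D, ?_, rfl⟩
      rw [mu_apply] at hE
      obtain ⟨-, -, h3, h4⟩ := hE
      rcases hc with h | h
      · exact of_mul_mem_LT (neg_mem_iff.1 h4) dp h (by omega)
      · exact of_mul_mem_LT h3 dq h (by omega)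
    · rintro ⟨g, hg, hgf⟩
      have hG := hm_hom r g
      have hF : (X 0 * q - X 1 ^ 2 * p).IsHomogeneous (b + 1) := by
        apply IsHomogeneous.sub
        · have := (isHomogeneous_X k (0 : Fin 4)).mul hq
          rwa [add_comm] at this
        · have := ((isHomogeneous_X k (1 : Fin 4)).pow 2).mul hp
          have e : 1 * 2 + (b - 1) = b + 1 := by omega
          rwa [e] at this
      have hGF : (hm k r g * (X 0 * q - X 1 ^ 2 * p)).IsHomogeneous (m + 2) := by
        have := hG.mul hF
        convert this using 1; omega
      have h1 := sub_LL I i1 i2 i3 m _ (hf'.sub hGF)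
      rw [map_sub, Ph_f, dl_hm r g hg, hgf, sub_self, map_zero, sub_zero] at h1
      have := I.add_mem h1 (I.mul_mem_left (hm k r g) i4)
      simpa using this
  have : FiniteDimensional k ((homogeneousSubmodule (Fin 4) k (m + 2)).map (Ph k)) := by
    rw [map_Ph]; infer_instance
  have h := finrank_aux (Ideal.Quotient.mkₐ k I).toLinearMap (Ph k) _ U hU key
  have hUr : Module.finrank k U = r + 1 := by
    rw [← finrank_degreeLT (k := k) (r + 1)]
    exact (LinearEquiv.finrank_eq (Submodule.equivMapOfInjective _ hinj _)).symm
  rw [map_Ph, finrank_EE, hUr] at h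
  unfold gradedPieceDim
  push_cast
  omega
end

section
/- Let b ≥ 1 be an integer and let (p,q) and (p′,q′) be two pairs of homogeneous polynomials of degrees b−1 and b respectively, each pair having no common zeros along Y. Then the ideals (x², xy, y³, xq − y²p) and (x², xy, y³, xq′ − y²p′) of S are equal if and only if there exists c ∈ k* such that p′ ≡ cp (mod (x,y)) and q′ ≡ cq (mod (x,y)). -/
open MvPolynomial

theorem aux_span4 {R : Type*} [CommRing R] {a b c d t : R} :
    t ∈ Ideal.span {a, b, c, d} ↔ ∃ A B E h, t = A * a + B * b + E * c + h * d := by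
  simp only [Ideal.mem_span_insert, Ideal.mem_span_singleton']
  constructor
  · rintro ⟨A, _, ⟨B, _, ⟨E, _, ⟨h, rfl⟩, rfl⟩, rfl⟩, rfl⟩
    exact ⟨A, B, E, h, by ring⟩
  · rintro ⟨A, B, E, h, rfl⟩
    exact ⟨A, _, ⟨B, _, ⟨E, _, ⟨h, rfl⟩, rfl⟩, rfl⟩, by ring⟩

theorem aux_uv {k : Type*} [Field k] (u v A B E : MvPolynomial (Fin 4) k)
    (H : X 0 * u - X 1 ^ 2 * v = A * X 0 ^ 2 + B * (X 0 * X 1) + E * X 1 ^ 3) :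
    u ∈ (Ideal.span {X 0, X 1} : Ideal (MvPolynomial (Fin 4) k)) ∧
    v ∈ (Ideal.span {X 0, X 1} : Ideal (MvPolynomial (Fin 4) k)) := by
  have hP : Prime (X 0 : MvPolynomial (Fin 4) k) := MvPolynomial.X_prime
  have h1 : (X 0 : MvPolynomial (Fin 4) k) ∣ X 1 ^ 2 * (v + X 1 * E) :=
    ⟨u - A * X 0 - B * X 1, by linear_combination -H⟩
  have h2 : (X 0 : MvPolynomial (Fin 4) k) ∣ v + X 1 * E := by
    rcases hP.dvd_or_dvd h1 with h | h
    · have := hP.dvd_of_dvd_pow h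
      rw [MvPolynomial.X_dvd_X] at this
      simp at this
    · exact h
  obtain ⟨t, ht⟩ := h2
  simp only [Ideal.mem_span_pair]
  refine ⟨⟨A, B + X 1 * t, ?_⟩, ⟨t, -E, by linear_combination -ht⟩⟩
  apply mul_left_cancel₀ hP.ne_zero
  linear_combination -H + X 1 ^ 2 * (-ht)

theorem aux_coeff {k : Type*} [Field k] (f : MvPolynomial (Fin 4) k) :
    f ∈ (Ideal.span {X 0, X 1} : Ideal (MvPolynomial (Fin 4) k)) ↔
      ∀ m : Fin 4 →₀ ℕ, m 0 = 0 → m 1 = 0 → coeff m f = 0 := by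
  have : ({X 0, X 1} : Set (MvPolynomial (Fin 4) k)) = X '' {0, 1} := by
    simp [Set.image_pair]
  rw [this, MvPolynomial.mem_ideal_span_X_image]
  constructor
  · intro h m h0 h1
    by_contra hc
    obtain ⟨i, hi, h2⟩ := h m (by simpa using hc)
    rcases hi with rfl | rfl
    · exact h2 h0
    · exact h2 h1
  · intro h m hm
    by_contra! hc
    exact (by simpa using hm : coeff m f ≠ 0) (h m (hc 0 (by simp)) (hc 1 (by simp)))

theorem aux_hom {k : Type*} [Field k] (n : ℕ) (f f' h : MvPolynomial (Fin 4) k)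
    (hf : f.IsHomogeneous n) (hf' : f'.IsHomogeneous n)
    (H : f' - h * f ∈ (Ideal.span {X 0, X 1} : Ideal (MvPolynomial (Fin 4) k))) :
    f' - C (coeff 0 h) * f ∈ (Ideal.span {X 0, X 1} : Ideal (MvPolynomial (Fin 4) k)) := by
  rw [aux_coeff] at H ⊢
  intro m h0 h1
  by_cases hm : m.degree = n
  · rw [← H m h0 h1, coeff_sub, coeff_sub, coeff_C_mul, coeff_mul]
    congr 1
    rw [Finset.sum_eq_single (0, m)]
    · rintro ⟨a, c⟩ hac hne
      rw [Finset.HasAntidiagonal.mem_antidiagonal] at hac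
      simp only at hac ⊢
      rw [hf.coeff_eq_zero (d := c), mul_zero]
      intro hc
      apply hne
      have : a.degree = 0 := by
        have := congrArg Finsupp.degree hac
        rw [map_add] at this
        omega
      rw [Finsupp.degree_eq_zero_iff] at this
      subst this
      simpa using hac
    · intro hh
      simp at hh
  · rw [coeff_sub, coeff_C_mul, hf.coeff_eq_zero hm, hf'.coeff_eq_zero hm]
    simp

theorem aux_le {k : Type*} [Field k] (c : k) (hc : c ≠ 0) (p q p' q' : MvPolynomial (Fin 4) k)
    (h1 : p' - C c * p ∈ (Ideal.span {X 0, X 1} : Ideal (MvPolynomial (Fin 4) k)))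
    (h2 : q' - C c * q ∈ (Ideal.span {X 0, X 1} : Ideal (MvPolynomial (Fin 4) k))) :
    (Ideal.span {X 0 ^ 2, X 0 * X 1, X 1 ^ 3, X 0 * q - X 1 ^ 2 * p} :
        Ideal (MvPolynomial (Fin 4) k))
        = Ideal.span {X 0 ^ 2, X 0 * X 1, X 1 ^ 3, X 0 * q' - X 1 ^ 2 * p'} := by
  rw [Ideal.mem_span_pair] at h1 h2
  obtain ⟨a, d, h1⟩ := h1
  obtain ⟨e, g, h2⟩ := h2
  have hcc : (C c⁻¹ * C c : MvPolynomial (Fin 4) k) = 1 := by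
    rw [← C_mul, inv_mul_cancel₀ hc, C_1]
  ext t
  rw [aux_span4, aux_span4]
  constructor
  · rintro ⟨A, B, E, h, rfl⟩
    refine ⟨A - h * C c⁻¹ * e, B - h * C c⁻¹ * (g - X 1 * a), E + h * C c⁻¹ * d, h * C c⁻¹, ?_⟩
    linear_combination h * C c⁻¹ * X 0 * h2 - h * C c⁻¹ * X 1 ^ 2 * h1
      - h * (X 0 * q - X 1 ^ 2 * p) * hcc
  · rintro ⟨A, B, E, h, rfl⟩
    refine ⟨A + h * e, B + h * (g - X 1 * a), E - h * d, h * C c, ?_⟩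
    linear_combination - h * X 0 * h2 + h * X 1 ^ 2 * h1

/-- two pairs `(p,q)` and `(p′,q′)` of homogeneous polynomials of degrees
`b−1, b`, each with no common zeros along `Y`, define the same triple line
`(x², xy, y³, xq − y²p)` iff they agree up to a nonzero scalar modulo `(x,y)`. -/
theorem stmt_5 {k : Type*} [Field k] [IsAlgClosed k] (b : ℕ) (hb : 1 ≤ b)
    (p q p' q' : MvPolynomial (Fin 4) k)
    (hp : p.IsHomogeneous (b - 1)) (hq : q.IsHomogeneous b)
    (hp' : p'.IsHomogeneous (b - 1)) (hq' : q'.IsHomogeneous b)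
    (hpq : NoCommonZerosAlongY p q) (hpq' : NoCommonZerosAlongY p' q') :
    (Ideal.span {X 0 ^ 2, X 0 * X 1, X 1 ^ 3, X 0 * q - X 1 ^ 2 * p} :
        Ideal (MvPolynomial (Fin 4) k))
        = Ideal.span {X 0 ^ 2, X 0 * X 1, X 1 ^ 3, X 0 * q' - X 1 ^ 2 * p'} ↔
      ∃ c : k, c ≠ 0 ∧ p' - C c * p ∈ (Ideal.span {X 0, X 1} : Ideal (MvPolynomial (Fin 4) k)) ∧
        q' - C c * q ∈ (Ideal.span {X 0, X 1} : Ideal (MvPolynomial (Fin 4) k)) := by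
  constructor
  · intro H
    have hm : X 0 * q' - X 1 ^ 2 * p' ∈ (Ideal.span {X 0 ^ 2, X 0 * X 1, X 1 ^ 3,
        X 0 * q - X 1 ^ 2 * p} : Ideal (MvPolynomial (Fin 4) k)) := by
      rw [H]
      exact Ideal.subset_span (by simp)
    rw [aux_span4] at hm
    obtain ⟨A, B, E, h, hm⟩ := hm
    obtain ⟨hu, hv⟩ := aux_uv (q' - h * q) (p' - h * p) A B E (by linear_combination hm)
    have hu := aux_hom b q q' h hq hq' hu
    have hv := aux_hom (b - 1) p p' h hp hp' hv
    refine ⟨coeff 0 h, ?_, hv, hu⟩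
    intro h0
    rw [h0, C_0, zero_mul, sub_zero, Ideal.mem_span_pair] at hu hv
    obtain ⟨a, d, rfl⟩ := hu
    obtain ⟨a', d', rfl⟩ := hv
    have := hpq' 1 0 (by simp)
    simp at this
  · rintro ⟨c, hc, h1, h2⟩
    exact aux_le c hc p q p' q' h1 h2
end
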